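/- arXiv:1608.05596 — 6 statements merged into one kernel-verified Lean document; each statement's English description precedes it below -/
import Mathlib

section
/- Let α be an irrational number and let g : 𝕋 → ℝ be a C¹ function with ∫_𝕋 g dm_𝕋 = 0. Then lim_{|n|→∞} sup_{x,y∈𝕋, x≠y} |g^{(n)}(x) − g^{(n)}(y)| / (|n|·‖x−y‖) = 0; that is, for every ε > 0 there exists N such that for all n ∈ ℤ with |n| ≥ N and all x ≠ y in 𝕋 one has |g^{(n)}(x) − g^{(n)}(y)| < ε·|n|·‖x−y‖. -/
/-!
The proof is elementary. By the mean value inequality and periodicity it suffices that the Birkhoff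
sums of `h = g'` satisfy `sup_x |∑_{i<n} h(x + iα)| = o(n)`.

For this, pick by Dirichlet's theorem `m ≥ 1` and `p ∈ ℤ` with `δ = mα - p` as small as desired;
`δ ≠ 0` because `α` is irrational. Since `h` is uniformly continuous, `δ h(t)` equals
`g(t + δ) - g(t)` up to `ε|δ|`, uniformly in `t`. By periodicity `g(t + δ) = g(t + mα)`, so the sum
of these differences along the orbit telescopes and is at most `2m‖g‖_∞`, independently of `n`.
Hence `|∑_{i<n} h(x + iα)| ≤ εn + 2m‖g‖_∞/|δ|`.

The case `n < 0` reduces to `n > 0` through `g^{(n)}(x) = -g^{(-n)}(x + nα)`.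
-/

/-- Distance of a real number to the nearest integer (the standard metric on 𝕋 = ℝ/ℤ,
pulled back to representatives). -/
noncomputable def normT (x : ℝ) : ℝ := |x - round x|

/-- The Birkhoff cocycle `g^{(n)}(x)` over the rotation by `α`, for `n ∈ ℤ`:
`g^{(n)}(x) = g(x) + g(x+α) + ⋯ + g(x+(n-1)α)` for `n > 0`, `g^{(0)} = 0`, and
`g^{(n)}(x) = -(g(x+nα) + ⋯ + g(x-α))` for `n < 0`. -/
noncomputable def birkhoff (α : ℝ) (g : ℝ → ℝ) (n : ℤ) (x : ℝ) : ℝ :=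
  if 0 ≤ n then ∑ i ∈ Finset.range n.toNat, g (x + (i : ℕ) * α)
  else -∑ i ∈ Finset.range (-n).toNat, g (x + ((n : ℝ) + (i : ℕ)) * α)

theorem periodic_uniform_continuity {h : ℝ → ℝ} (hper : Function.Periodic h 1)
    (hc : Continuous h) {ε : ℝ} (hε : 0 < ε) :
    ∃ η > 0, ∀ x y : ℝ, |x - y| < η → |h x - h y| ≤ ε := by
  have huc : UniformContinuousOn h (Set.Icc (-1) 2) :=
    isCompact_Icc.uniformContinuousOn_of_continuous hc.continuousOn
  obtain ⟨η, hη, H⟩ := Metric.uniformContinuousOn_iff.1 huc ε hε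
  refine ⟨min η 1, lt_min hη one_pos, fun x y hxy => ?_⟩
  have e : ∀ t : ℝ, h (t - ⌊x⌋) = h t := fun t => by
    simpa using hper.sub_int_mul_eq (x := t) ⌊x⌋
  have hx1 := Int.floor_le x
  have hx2 := Int.lt_floor_add_one x
  have h1 := lt_of_lt_of_le hxy (min_le_left _ _)
  obtain ⟨h2, h3⟩ := abs_lt.1 (lt_of_lt_of_le hxy (min_le_right _ _))
  have := H (x - ⌊x⌋) ⟨by linarith, by linarith⟩ (y - ⌊x⌋) ⟨by linarith, by linarith⟩
    (by rw [Real.dist_eq, sub_sub_sub_cancel_right]; exact h1)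
  rw [e, e, Real.dist_eq] at this
  exact this.le

theorem exists_small_return {α : ℝ} (hα : Irrational α) {η : ℝ} (hη : 0 < η) :
    ∃ (m : ℕ) (p : ℤ), (m : ℝ) * α - p ≠ 0 ∧ |(m : ℝ) * α - p| < η := by
  obtain ⟨n, hn⟩ := exists_nat_one_div_lt hη
  obtain ⟨k, hk, -, hk2⟩ := Real.exists_nat_abs_mul_sub_round_le α (Nat.succ_pos n)
  refine ⟨k, round ((k : ℝ) * α), fun h => ?_, ?_⟩
  · exact (hα.natCast_mul hk.ne').ne_int _ (sub_eq_zero.1 h)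
  · refine lt_of_le_of_lt hk2 (lt_of_le_of_lt ?_ hn)
    push_cast
    gcongr
    linarith

theorem abs_sum_shift_sub_le {M : ℝ} {G : ℕ → ℝ} (hG : ∀ i, |G i| ≤ M) (n m : ℕ) :
    |∑ i ∈ Finset.range n, (G (m + i) - G i)| ≤ 2 * m * M := by
  have h1 := Finset.sum_range_add G n m
  have h2 := Finset.sum_range_add G m n
  rw [add_comm m n] at h2
  have : ∑ i ∈ Finset.range n, (G (m + i) - G i) = ∑ i ∈ Finset.range m, (G (n + i) - G i) := by
    rw [Finset.sum_sub_distrib, Finset.sum_sub_distrib]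
    linarith
  rw [this]
  refine (Finset.abs_sum_le_sum_abs _ _).trans ?_
  refine (Finset.sum_le_card_nsmul _ _ (2 * M) fun i _ => ?_).trans (le_of_eq ?_)
  · exact (abs_sub _ _).trans (by linarith [hG (n + i), hG i])
  · simp; ring

/-- Uniform vanishing of the Birkhoff averages of the derivative of a `1`-periodic `C¹` function. -/
theorem birkhoff_deriv_small {α : ℝ} (hα : Irrational α) {g : ℝ → ℝ}
    (hper : Function.Periodic g 1) (hg : ContDiff ℝ 1 g) {ε : ℝ} (hε : 0 < ε) :
    ∃ N : ℕ, ∀ n : ℕ, N ≤ n → ∀ x : ℝ,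
      |∑ i ∈ Finset.range n, deriv g (x + (i : ℝ) * α)| ≤ ε * n := by
  have hd : Differentiable ℝ g := hg.differentiable (by norm_num)
  have hdc : Continuous (deriv g) := hg.continuous_deriv (by norm_num)
  have hdper : Function.Periodic (deriv g) 1 := fun x => by
    have : (fun t => g (t + 1)) = g := funext hper
    rw [← deriv_comp_add_const, this]
  obtain ⟨M, hM⟩ : ∃ M, ∀ x, |g x| ≤ M := by
    obtain ⟨M, hM⟩ := (hper.isBounded_of_continuous one_ne_zero hg.continuous).exists_norm_le
    exact ⟨M, fun x => hM _ ⟨x, rfl⟩⟩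
  obtain ⟨η, hη, hu⟩ := periodic_uniform_continuity hdper hdc (half_pos hε)
  obtain ⟨m, p, hδ0, hδ⟩ := exists_small_return hα hη
  set δ : ℝ := (m : ℝ) * α - p with hδdef
  have hδp : 0 < |δ| := abs_pos.2 hδ0
  have key : ∀ x, |δ * deriv g x - (g (x + δ) - g x)| ≤ ε / 2 * |δ| := by
    intro x
    have := (convex_ball x η).norm_image_sub_le_of_norm_hasDerivWithin_le
      (f := fun t => g t - deriv g x * t) (f' := fun t => deriv g t - deriv g x * 1)
      (x := x) (y := x + δ) (C := ε / 2)
      (fun t _ => ((hd t).hasDerivAt.sub ((hasDerivAt_id t).const_mul _)).hasDerivWithinAt)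
      (fun t ht => by
        rw [mul_one]; exact hu t x (by simpa [Real.dist_eq] using ht))
      (by simpa using hη) (by simpa [Real.dist_eq] using hδ)
    simp only [Real.norm_eq_abs, add_sub_cancel_left] at this
    rw [abs_sub_comm]
    convert this using 2
    ring
  have hshift : ∀ (x : ℝ) (i : ℕ), g (x + (i : ℝ) * α + δ) = g (x + ((m + i : ℕ) : ℝ) * α) := by
    intro x i
    have := hper.sub_int_mul_eq (x := x + ((m + i : ℕ) : ℝ) * α) p
    rw [← this]
    congr 1
    push_cast
    rw [hδdef]; ring
  -- Beyond this threshold the telescoping error `2mM/|δ|` is at most `(ε/2) n`.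
  obtain ⟨N, hN⟩ := exists_nat_ge (2 * m * M / (ε / 2 * |δ|))
  refine ⟨N, fun n hn x => ?_⟩
  have hn' : 2 * m * M ≤ ε / 2 * |δ| * n := by
    have : 2 * m * M / (ε / 2 * |δ|) ≤ n := hN.trans (by exact_mod_cast hn)
    rw [div_le_iff₀ (by positivity)] at this
    linarith
  have h1 := abs_sum_shift_sub_le (G := fun i : ℕ => g (x + (i : ℝ) * α)) (fun i => hM _) n m
  have h2 : |∑ i ∈ Finset.range n, (δ * deriv g (x + (i : ℝ) * α) -
      (g (x + (i : ℝ) * α + δ) - g (x + (i : ℝ) * α)))| ≤ n * (ε / 2 * |δ|) := by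
    refine (Finset.abs_sum_le_sum_abs _ _).trans ?_
    refine (Finset.sum_le_card_nsmul _ _ _ fun i _ => key _).trans (le_of_eq ?_)
    simp
  rw [Finset.sum_sub_distrib, ← Finset.mul_sum] at h2
  simp only [hshift] at h2
  have h3 : |δ * ∑ i ∈ Finset.range n, deriv g (x + (i : ℝ) * α)| ≤ |δ| * (ε * n) := by
    have := abs_sub_abs_le_abs_sub (δ * ∑ i ∈ Finset.range n, deriv g (x + (i : ℝ) * α))
      (∑ i ∈ Finset.range n, (g (x + ((m + i : ℕ) : ℝ) * α) - g (x + (i : ℝ) * α)))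
    nlinarith
  rw [abs_mul] at h3
  exact le_of_mul_le_mul_left h3 hδp

theorem birkhoff_neg_index (α : ℝ) (g : ℝ → ℝ) {n : ℤ} (hn : n < 0) (x : ℝ) :
    birkhoff α g n x = -∑ i ∈ Finset.range n.natAbs, g (x + n * α + (i : ℝ) * α) := by
  have h : (-n).toNat = n.natAbs := by omega
  rw [birkhoff, if_neg (not_le.2 hn), h]
  congr 1
  refine Finset.sum_congr rfl fun i _ => ?_
  congr 1
  ring

/-- For an irrational rotation and a `C¹` function `g` on the circle (modelled as a
`1`-periodic `C¹` function on `ℝ`) with zero mean,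
`sup_{x ≠ y} |g^{(n)}(x) - g^{(n)}(y)| / (|n|·‖x-y‖) → 0` as `|n| → ∞`. -/
theorem vonNeumann_C1_linear_cancellation
    (α : ℝ) (hα : Irrational α)
    (g : ℝ → ℝ) (hper : Function.Periodic g 1) (hg : ContDiff ℝ 1 g)
    (hint : ∫ x in (0:ℝ)..1, g x = 0) :
    ∀ ε > 0, ∃ N : ℕ, ∀ n : ℤ, (N : ℤ) ≤ |n| →
      ∀ x y : ℝ, normT (x - y) ≠ 0 →
        |birkhoff α g n x - birkhoff α g n y| < ε * |(n : ℝ)| * normT (x - y) := by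
  intro ε hε
  have hd : Differentiable ℝ g := hg.differentiable (by norm_num)
  obtain ⟨N, hN⟩ := birkhoff_deriv_small hα hper hg (half_pos hε)
  have hS : ∀ n : ℕ, N ≤ n → ∀ x y : ℝ,
      |∑ i ∈ Finset.range n, g (x + (i : ℝ) * α) - ∑ i ∈ Finset.range n, g (y + (i : ℝ) * α)|
        ≤ ε / 2 * n * normT (x - y) := by
    intro n hn x y
    have hy : ∀ i : ℕ, g (y + (i : ℝ) * α) = g (y + round (x - y) + (i : ℝ) * α) := fun i => by
      have := (hper.int_mul (round (x - y))) (y + (i : ℝ) * α)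
      rw [← this]
      congr 1
      ring
    have := convex_univ.norm_image_sub_le_of_norm_hasDerivWithin_le
      (f := fun t => ∑ i ∈ Finset.range n, g (t + (i : ℝ) * α))
      (f' := fun t => ∑ i ∈ Finset.range n, deriv g (t + (i : ℝ) * α))
      (x := y + round (x - y)) (y := x) (C := ε / 2 * n)
      (fun t _ => (HasDerivAt.fun_sum (u := Finset.range n) fun i _ =>
        (hd (t + (i : ℝ) * α)).hasDerivAt.comp_add_const t _).hasDerivWithinAt)
      (fun t _ => hN n hn t) trivial trivial
    simp only [Real.norm_eq_abs] at this
    rw [Finset.sum_congr rfl fun i _ => hy i, normT]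
    convert this using 3
    ring
  -- `N + 1` rather than `N`, so that `n ≠ 0` and the inequality is strict.
  refine ⟨N + 1, fun n hn x y hxy => ?_⟩
  have hnat : N + 1 ≤ n.natAbs := by
    rw [Int.abs_eq_natAbs] at hn
    exact_mod_cast hn
  have hcast : |(n : ℝ)| = (n.natAbs : ℝ) := by rw [Nat.cast_natAbs, Int.cast_abs]
  have hT : 0 < normT (x - y) := lt_of_le_of_ne (abs_nonneg _) hxy.symm
  have hpos : (0 : ℝ) < n.natAbs := by exact_mod_cast (by omega : 0 < n.natAbs)
  have hlt : ε / 2 * n.natAbs * normT (x - y) < ε * |(n : ℝ)| * normT (x - y) := by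
    rw [hcast]
    gcongr
    linarith
  refine lt_of_le_of_lt ?_ hlt
  rcases le_or_gt 0 n with h0 | h0
  · have ht : n.toNat = n.natAbs := by omega
    simp only [birkhoff, if_pos h0, ht]
    exact hS _ (by omega) x y
  · rw [birkhoff_neg_index α g h0, birkhoff_neg_index α g h0, neg_sub_neg, abs_sub_comm]
    have := hS n.natAbs (by omega) (x + n * α) (y + n * α)
    rwa [add_sub_add_right_eq_sub] at this
end

section
/- Let α be an irrational number and let g : 𝕋 → ℝ be a C¹ function with ∫_𝕋 g dm_𝕋 = 0. Then for every ε > 0 there exists δ₀ > 0 such that for all x, y ∈ 𝕋 with 0 < ‖x−y‖ < δ₀ and every n ∈ ℤ one has |g^{(n)}(x) − g^{(n)}(y)| < ε·max{1, |n|·‖x−y‖}. -/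
open AddCircle MeasureTheory in
/-- The Birkhoff sums of a trigonometric polynomial stay within bounded distance of `n` times its
mean. -/
lemma trigPoly_birkhoffSum_bounded (α : ℝ) (hα : Irrational α) (p : C(AddCircle (1:ℝ), ℂ))
    (hp : p ∈ Submodule.span ℂ (Set.range (@fourier 1))) :
    ∃ C : ℝ, ∀ (n : ℕ) (t : ℝ),
      ‖∑ i ∈ Finset.range n, p ((t + i * α : ℝ) : AddCircle (1:ℝ))
        - n * ∫ z, p z ∂haarAddCircle‖ ≤ C := by
  have hI : ∀ q : C(AddCircle (1:ℝ), ℂ), Integrable (fun z => q z) haarAddCircle := fun q =>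
    q.continuous.integrable_of_hasCompactSupport (HasCompactSupport.of_compactSpace _)
  induction hp using Submodule.span_induction with
  | mem p hp =>
    obtain ⟨k, rfl⟩ := hp
    rcases eq_or_ne k 0 with rfl | hk
    · exact ⟨0, fun n t => by simp⟩
    · have hint : ∫ z, (fourier k : C(AddCircle (1:ℝ), ℂ)) z ∂haarAddCircle = 0 :=
        integral_eq_zero_of_add_right_eq_neg (μ := haarAddCircle)
          (fourier_add_half_inv_index hk one_pos)
      set w : ℂ := (fourier k : C(AddCircle (1:ℝ), ℂ)) (α : AddCircle (1:ℝ)) with hw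
      have hw1 : w ≠ 1 := by
        rw [hw, fourier_coe_apply, Ne, Complex.exp_eq_one_iff]
        rintro ⟨m, hm⟩
        have h2 : (2 * Real.pi * Complex.I) ≠ 0 := Complex.two_pi_I_ne_zero
        have h3 : (k : ℂ) * α = m := by
          apply mul_left_cancel₀ h2
          rw [mul_comm (2 * Real.pi * Complex.I) (m : ℂ), ← hm]
          push_cast
          ring
        have h4 : (k : ℝ) * α = m := by exact_mod_cast h3
        exact (hα.intCast_mul hk).ne_int m h4
      have hsum : ∀ (n : ℕ) (t : ℝ), ∑ i ∈ Finset.range n,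
          (fourier k : C(AddCircle (1:ℝ), ℂ)) ((t + i * α : ℝ) : AddCircle (1:ℝ))
          = (fourier k : C(AddCircle (1:ℝ), ℂ)) (t : AddCircle (1:ℝ)) *
            ((w ^ n - 1) / (w - 1)) := by
        intro n t
        rw [← geom_sum_eq hw1, Finset.mul_sum]
        refine Finset.sum_congr rfl fun i _ => ?_
        rw [hw, fourier_coe_apply, fourier_coe_apply, fourier_coe_apply, ← Complex.exp_nat_mul,
          ← Complex.exp_add]
        congr 1
        push_cast
        ring
      have hn1 : ∀ z : AddCircle (1:ℝ), ‖(fourier k : C(AddCircle (1:ℝ), ℂ)) z‖ = 1 :=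
        fun z => Circle.norm_coe _
      refine ⟨2 / ‖w - 1‖, fun n t => ?_⟩
      rw [hint, mul_zero, sub_zero, hsum, norm_mul, hn1, one_mul, norm_div]
      gcongr
      calc ‖w ^ n - 1‖ ≤ ‖w ^ n‖ + ‖(1:ℂ)‖ := norm_sub_le _ _
        _ = 2 := by rw [norm_pow, hw, hn1]; norm_num
  | zero => exact ⟨0, fun n t => by simp⟩
  | add p q _ _ hp hq =>
    obtain ⟨C, hC⟩ := hp
    obtain ⟨D, hD⟩ := hq
    refine ⟨C + D, fun n t => ?_⟩
    refine le_trans (le_of_eq ?_) ((norm_add_le _ _).trans (add_le_add (hC n t) (hD n t)))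
    simp only [ContinuousMap.add_apply]
    rw [integral_add (hI p) (hI q), Finset.sum_add_distrib]
    congr 1
    ring
  | smul a p _ hp =>
    obtain ⟨C, hC⟩ := hp
    refine ⟨‖a‖ * C, fun n t => ?_⟩
    refine le_trans (le_of_eq ?_) (mul_le_mul_of_nonneg_left (hC n t) (norm_nonneg a))
    simp only [ContinuousMap.smul_apply, smul_eq_mul]
    rw [integral_const_mul, ← Finset.mul_sum, ← norm_mul]
    congr 1
    ring

open AddCircle MeasureTheory in
/-- Uniform convergence of Birkhoff averages of a mean-zero continuous function over an irrational
rotation. -/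
lemma birkhoffSum_le_of_integral_eq_zero (α : ℝ) (hα : Irrational α) (f : C(AddCircle (1:ℝ), ℂ))
    (hf : ∫ z, f z ∂haarAddCircle = 0) {η : ℝ} (hη : 0 < η) :
    ∃ C : ℝ, ∀ (n : ℕ) (t : ℝ),
      ‖∑ i ∈ Finset.range n, f ((t + i * α : ℝ) : AddCircle (1:ℝ))‖ ≤ C + η * n := by
  have hI : ∀ q : C(AddCircle (1:ℝ), ℂ), Integrable (fun z => q z) haarAddCircle := fun q =>
    q.continuous.integrable_of_hasCompactSupport (HasCompactSupport.of_compactSpace _)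
  have hmem : f ∈ closure
      ((Submodule.span ℂ (Set.range (@fourier 1)) : Submodule ℂ C(AddCircle (1:ℝ), ℂ)) :
        Set C(AddCircle (1:ℝ), ℂ)) := by
    rw [← Submodule.topologicalClosure_coe, span_fourier_closure_eq_top]
    trivial
  obtain ⟨p, hp, hfp⟩ := Metric.mem_closure_iff.1 hmem (η / 2) (half_pos hη)
  rw [dist_eq_norm] at hfp
  have hpt : ∀ z, ‖f z - p z‖ ≤ η / 2 := fun z =>
    ((f - p).norm_coe_le_norm z).trans hfp.le
  have hmean : ‖∫ z, p z ∂haarAddCircle‖ ≤ η / 2 := by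
    have h1 : ∫ z, p z ∂haarAddCircle = -∫ z, (f z - p z) ∂haarAddCircle := by
      rw [integral_sub (hI f) (hI p), hf]
      ring
    rw [h1, norm_neg]
    simpa using norm_integral_le_of_norm_le_const (μ := haarAddCircle) (C := η / 2)
      (Filter.Eventually.of_forall hpt)
  obtain ⟨C, hC⟩ := trigPoly_birkhoffSum_bounded α hα p hp
  refine ⟨C, fun n t => ?_⟩
  have hdiff : ‖∑ i ∈ Finset.range n, (f ((t + i * α : ℝ) : AddCircle (1:ℝ))
      - p ((t + i * α : ℝ) : AddCircle (1:ℝ)))‖ ≤ n * (η / 2) := by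
    simpa using norm_sum_le_of_le (Finset.range n) (fun i _ => hpt ((t + i * α : ℝ)))
  have hnm : ‖(n : ℂ) * ∫ z, p z ∂haarAddCircle‖ ≤ n * (η / 2) := by
    rw [norm_mul, Complex.norm_natCast]
    gcongr
  have hsplit : ∑ i ∈ Finset.range n, f ((t + i * α : ℝ) : AddCircle (1:ℝ))
      = ∑ i ∈ Finset.range n, (f ((t + i * α : ℝ) : AddCircle (1:ℝ))
          - p ((t + i * α : ℝ) : AddCircle (1:ℝ)))
        + (∑ i ∈ Finset.range n, p ((t + i * α : ℝ) : AddCircle (1:ℝ))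
          - n * ∫ z, p z ∂haarAddCircle) + n * ∫ z, p z ∂haarAddCircle := by
    rw [Finset.sum_sub_distrib]
    ring
  rw [hsplit]
  refine norm_add₃_le.trans ?_
  linarith [hC n t]

open AddCircle MeasureTheory in
/-- The derivative of a `1`-periodic `C¹` function has mean zero, so its Birkhoff sums are
uniformly sublinear. -/
lemma exists_bound_birkhoffSum_deriv (α : ℝ) (hα : Irrational α)
    (g : ℝ → ℝ) (hper : Function.Periodic g 1) (hg : ContDiff ℝ 1 g) {η : ℝ} (hη : 0 < η) :
    ∃ C : ℝ, ∀ (n : ℕ) (t : ℝ),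
      |∑ i ∈ Finset.range n, deriv g (t + i * α)| ≤ C + η * n := by
  have hc : Continuous (deriv g) := hg.continuous_deriv le_rfl
  have hdper : Function.Periodic (fun t : ℝ => ((deriv g t : ℝ) : ℂ)) 1 := by
    intro t
    have h1 : (fun s => g (s + 1)) = g := funext hper
    have h2 : deriv g (t + 1) = deriv g t := by rw [← deriv_comp_add_const, h1]
    simp only [h2]
  let f : C(AddCircle (1:ℝ), ℂ) :=
    ⟨hdper.lift, continuous_coinduced_dom.2 (Complex.continuous_ofReal.comp hc)⟩
  have hft : ∀ t : ℝ, f (t : AddCircle (1:ℝ)) = ((deriv g t : ℝ) : ℂ) := fun t => rfl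
  have hf : ∫ z, f z ∂haarAddCircle = 0 := by
    rw [integral_haarAddCircle, ← AddCircle.intervalIntegral_preimage 1 0]
    simp only [hft]
    rw [intervalIntegral.integral_ofReal, intervalIntegral.integral_deriv_eq_sub
      (fun x _ => hg.differentiable one_ne_zero x) (hc.intervalIntegrable _ _), hper 0]
    simp
  obtain ⟨C, hC⟩ := birkhoffSum_le_of_integral_eq_zero α hα f hf hη
  refine ⟨C, fun n t => ?_⟩
  have h := hC n t
  simp only [hft] at h
  rwa [← Complex.ofReal_sum, Complex.norm_real, Real.norm_eq_abs] at h

/-- Mean value inequality for Birkhoff sums, with distances measured on the circle. -/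
lemma birkhoffSum_sub_le (α : ℝ) (g : ℝ → ℝ) (hper : Function.Periodic g 1)
    (hg : ContDiff ℝ 1 g) (n : ℕ) (B : ℝ)
    (hB : ∀ t : ℝ, |∑ i ∈ Finset.range n, deriv g (t + i * α)| ≤ B) (x y : ℝ) :
    |∑ i ∈ Finset.range n, g (x + i * α) - ∑ i ∈ Finset.range n, g (y + i * α)|
      ≤ B * normT (x - y) := by
  have hd : ∀ t : ℝ, HasDerivAt (fun t => ∑ i ∈ Finset.range n, g (t + i * α))
      (∑ i ∈ Finset.range n, deriv g (t + i * α)) t := fun t =>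
    HasDerivAt.fun_sum fun i _ =>
      ((hg.differentiable one_ne_zero (t + i * α)).hasDerivAt).comp_add_const t (i * α)
  have hshift : ∑ i ∈ Finset.range n, g (y + i * α)
      = ∑ i ∈ Finset.range n, g ((y + round (x - y)) + i * α) := by
    refine Finset.sum_congr rfl fun i _ => ?_
    have := hper.int_mul (round (x - y)) (y + i * α)
    rw [mul_one] at this
    rw [← this]
    congr 1
    ring
  have h := convex_univ.norm_image_sub_le_of_norm_hasDerivWithin_le
    (fun t _ => (hd t).hasDerivWithinAt) (fun t _ => hB t)
    (Set.mem_univ (y + round (x - y))) (Set.mem_univ x)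
  rw [Real.norm_eq_abs, Real.norm_eq_abs, ← sub_sub] at h
  rw [hshift]
  exact h

/-- For every `ε > 0` there is `δ₀ > 0` such that whenever `0 < ‖x-y‖ < δ₀`, for all `n ∈ ℤ`,
`|g^{(n)}(x) - g^{(n)}(y)| < ε · max{1, |n|·‖x-y‖}`. -/
theorem vonNeumann_C1_uniform_bound
    (α : ℝ) (hα : Irrational α)
    (g : ℝ → ℝ) (hper : Function.Periodic g 1) (hg : ContDiff ℝ 1 g)
    (hint : ∫ x in (0:ℝ)..1, g x = 0) :
    ∀ ε > 0, ∃ δ₀ > 0, ∀ x y : ℝ, 0 < normT (x - y) → normT (x - y) < δ₀ →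
      ∀ n : ℤ,
        |birkhoff α g n x - birkhoff α g n y| < ε * max 1 (|(n : ℝ)| * normT (x - y)) := by
  intro ε hε
  obtain ⟨C, hC⟩ := exists_bound_birkhoffSum_deriv α hα g hper hg (half_pos hε)
  have hC1 : 0 < |C| + 1 := by positivity
  refine ⟨ε / 2 / (|C| + 1), by positivity, fun x y hd0 hd n => ?_⟩
  have hCd : C * normT (x - y) < ε / 2 := by
    have h1 := (lt_div_iff₀ hC1).1 hd
    nlinarith [le_abs_self C]
  have key : ∀ N : ℕ, (N : ℝ) = |(n : ℝ)| → ∀ x' y' : ℝ, x' - y' = x - y →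
      |∑ i ∈ Finset.range N, g (x' + i * α) - ∑ i ∈ Finset.range N, g (y' + i * α)|
        < ε * max 1 (|(n : ℝ)| * normT (x - y)) := by
    intro N hN x' y' hxy
    have h := birkhoffSum_sub_le α g hper hg N _ (hC N) x' y'
    rw [hxy, hN] at h
    have h1 := le_max_left 1 (|(n : ℝ)| * normT (x - y))
    have h2 := le_max_right 1 (|(n : ℝ)| * normT (x - y))
    nlinarith
  unfold birkhoff
  split_ifs with hn
  · refine key _ ?_ x y rfl
    rw [abs_of_nonneg (by exact_mod_cast hn)]
    exact_mod_cast Int.toNat_of_nonneg hn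
  · have hN : (((-n).toNat : ℕ) : ℝ) = |(n : ℝ)| := by
      rw [abs_of_neg (by exact_mod_cast not_le.1 hn)]
      exact_mod_cast Int.toNat_of_nonneg (by omega : 0 ≤ -n)
    have h := key _ hN (x + n * α) (y + n * α) (by ring)
    rw [neg_sub_neg, abs_sub_comm]
    simpa only [add_mul, add_assoc] using h
end

section
/- Let α be an irrational number with continued fraction denominators (q_n). Fix x, y ∈ 𝕋 with x ≠ y, and let n ∈ ℕ satisfy ‖x−y‖ < 1/(6q_n). Then at least one of the following holds: (a) 0 ∈ ⋃_{k=0}^{q_n−1} R_α^k [x,y]; (b) 0 ∉ ⋃_{k=0}^{⌊q_{n+1}/6⌋} R_α^k [x,y]; (c) 0 ∉ ⋃_{k=−⌊q_{n+1}/6⌋}^{0} R_α^k [x,y]. -/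
/-- `qden α n` is the denominator `q_n` of the `n`-th convergent of the continued fraction
expansion of `α`:  `q₀ = 1`, `q₁ = a₁`, `q_n = a_n q_{n-1} + q_{n-2}`. -/
noncomputable def qden (α : ℝ) (n : ℕ) : ℝ := (GenContFract.of α).dens n

/-- `hitsZero x y` says that the point `0` of `𝕋 = ℝ/ℤ` belongs to the shortest closed arc
connecting (the projections of) `x` and `y`, i.e. some integer lies in the interval from `x`
to the representative of `y` closest to `x`. -/
def hitsZero (x y : ℝ) : Prop :=
  ∃ m : ℤ, (m : ℝ) ∈ Set.uIcc x (x + (y - x - round (y - x)))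

/-- The numerators and denominators of the continued fraction of a real number are integers. -/
lemma exists_int_contsAux (α : ℝ) (n : ℕ) :
    ∃ a b : ℤ, (GenContFract.of α).contsAux n = ⟨(a : ℝ), (b : ℝ)⟩ := by
  induction n using Nat.strong_induction_on with
  | _ n ih =>
    match n, ih with
    | 0, _ => exact ⟨1, 0, by simp⟩
    | 1, _ => exact ⟨⌊α⌋, 1, by simp⟩
    | n + 2, ih =>
      obtain ⟨a, b, h⟩ := ih n (by omega)
      obtain ⟨a', b', h'⟩ := ih (n + 1) (by omega)
      rcases hs : (GenContFract.of α).s.get? n with _ | gp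
      · refine ⟨a', b', ?_⟩
        rw [← h']
        exact GenContFract.contsAux_stable_step_of_terminated hs
      · obtain ⟨h1, z, hz⟩ := GenContFract.of_partNum_eq_one_and_exists_int_partDen_eq hs
        refine ⟨z * a' + a, z * b' + b, ?_⟩
        rw [GenContFract.contsAux_recurrence hs h h', h1, hz]
        push_cast
        simp

lemma not_terminatedAt (α : ℝ) (hα : Irrational α) (n : ℕ) :
    ¬ (GenContFract.of α).TerminatedAt n := by
  intro h
  obtain ⟨q, hq⟩ := GenContFract.exists_rat_eq_of_terminates ⟨n, h⟩
  exact hα ⟨q, hq.symm⟩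

lemma qden_pos (α : ℝ) (hα : Irrational α) (n : ℕ) : 0 < qden α n := by
  have h : ((Nat.fib (n + 1) : ℕ) : ℝ) ≤ (GenContFract.of α).dens n :=
    GenContFract.succ_nth_fib_le_of_nth_den (Or.inr (not_terminatedAt α hα _))
  have h2 : (0 : ℝ) < (Nat.fib (n + 1) : ℕ) := by exact_mod_cast Nat.fib_pos.2 n.succ_pos
  exact h2.trans_le h

/-- The `n`-th convergent, as a quotient of coprime integers, with its approximation error. -/
lemma exists_coprime_convergent (α : ℝ) (hα : Irrational α) (n : ℕ) :
    ∃ p q : ℤ, (q : ℝ) = qden α n ∧ IsCoprime p q ∧ |q * α - p| ≤ 1 / qden α (n + 1) := by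
  obtain ⟨p, q, h⟩ := exists_int_contsAux α (n + 1)
  obtain ⟨p', q', h'⟩ := exists_int_contsAux α (n + 2)
  have hp : (GenContFract.of α).nums n = p := congrArg GenContFract.Pair.a h
  have hq : (GenContFract.of α).dens n = q := congrArg GenContFract.Pair.b h
  have hp' : (GenContFract.of α).nums (n + 1) = p' := congrArg GenContFract.Pair.a h'
  have hq' : (GenContFract.of α).dens (n + 1) = q' := congrArg GenContFract.Pair.b h'
  have hn := not_terminatedAt α hα n
  have q0 : (0 : ℝ) < q := by simpa only [qden, hq] using qden_pos α hα n
  have Q0 : (0 : ℝ) < qden α (n + 1) := qden_pos α hα (n + 1)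
  refine ⟨p, q, hq.symm, ?_, ?_⟩
  · have det : (GenContFract.of α).nums n * (GenContFract.of α).dens (n + 1) -
        (GenContFract.of α).dens n * (GenContFract.of α).nums (n + 1) = (-1) ^ (n + 1) :=
      SimpContFract.determinant (s := SimpContFract.of α) hn
    rw [hp, hq, hp', hq'] at det
    have det' : p * q' - q * p' = (-1) ^ (n + 1) := by exact_mod_cast det
    refine ⟨(-1) ^ (n + 1) * q', -((-1) ^ (n + 1) * p'), ?_⟩
    have sq : ((-1 : ℤ) ^ (n + 1)) * (-1) ^ (n + 1) = 1 := by rw [← mul_pow]; simp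
    linear_combination (-1) ^ (n + 1) * det' + sq
  · have happ := GenContFract.abs_sub_convs_le (v := α) hn
    rw [GenContFract.conv_eq_num_div_den, hp, hq] at happ
    change |α - p / q| ≤ 1 / (q * qden α (n + 1)) at happ
    have e : (q : ℝ) * α - p = q * (α - p / q) := by field_simp
    rw [e, abs_mul, abs_of_pos q0]
    calc (q : ℝ) * |α - p / q| ≤ q * (1 / (q * qden α (n + 1))) := by gcongr
      _ = 1 / qden α (n + 1) := by field_simp

/-- If an interval of length less than `1 / (6 q)` meets both `ℤ - k α` and `ℤ + l α` with
`0 ≤ k, l ≤ Q / 6`, then it meets `ℤ - r α` for some `0 ≤ r < q`. -/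
lemma arc_returns {α Q : ℝ} {p q : ℤ} (hq : 0 < q) (hQ : 0 < Q) (hc : IsCoprime p q)
    (hθ : |q * α - p| ≤ 1 / Q) {s : Set ℝ} (hs : s.OrdConnected)
    (hlen : ∀ u ∈ s, ∀ v ∈ s, |v - u| < 1 / (6 * q))
    {k l m₁ m₂ : ℤ} (hk0 : 0 ≤ k) (hl0 : 0 ≤ l) (hk : (k : ℝ) ≤ Q / 6) (hl : (l : ℝ) ≤ Q / 6)
    (hu : (m₁ - k * α : ℝ) ∈ s) (hv : (m₂ + l * α : ℝ) ∈ s) :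
    ∃ r m : ℤ, 0 ≤ r ∧ r < q ∧ (m - r * α : ℝ) ∈ s := by
  have q0 : (0 : ℝ) < q := by exact_mod_cast hq
  have hk0' : (0 : ℝ) ≤ k := by exact_mod_cast hk0
  have hl0' : (0 : ℝ) ≤ l := by exact_mod_cast hl0
  have h1 : |(q : ℝ) * ((m₂ + l * α) - (m₁ - k * α))| < 1 / 6 := by
    rw [abs_mul, abs_of_pos q0]
    calc _ < (q : ℝ) * (1 / (6 * q)) := by gcongr; exact hlen _ hu _ hv
      _ = 1 / 6 := by field_simp
  have h2 : |((k : ℝ) + l) * (q * α - p)| ≤ 1 / 3 := by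
    rw [abs_mul, abs_of_nonneg (by positivity)]
    calc _ ≤ (Q / 3) * (1 / Q) := by gcongr; linarith
      _ = 1 / 3 := by field_simp
  have hN : q * (m₂ - m₁) + (k + l) * p = 0 := by
    rw [← Int.abs_lt_one_iff]
    have : |((q * (m₂ - m₁) + (k + l) * p : ℤ) : ℝ)| < 1 := by
      push_cast
      rw [abs_lt] at h1 ⊢
      rw [abs_le] at h2
      constructor <;> nlinarith
    exact_mod_cast this
  have hdvd : q ∣ (k + l) * p := ⟨m₁ - m₂, by linear_combination hN⟩
  obtain ⟨j, hj⟩ := hc.symm.dvd_of_dvd_mul_right hdvd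
  have hN' : m₂ - m₁ + j * p = 0 := by
    have : q * (m₂ - m₁ + j * p) = 0 := by linear_combination hN - p * hj
    exact (mul_eq_zero.1 this).resolve_left hq.ne'
  have hdiv := Int.emod_add_mul_ediv k q
  have hr0 := Int.emod_nonneg k hq.ne'
  have hrq := Int.emod_lt_of_pos k hq
  have hi0 : 0 ≤ k / q := Int.ediv_nonneg hk0 hq.le
  have hij : k / q ≤ j := by
    have : q * (k / q) ≤ q * j := by linarith
    exact le_of_mul_le_mul_left this hq
  set i := k / q
  set r := k % q
  refine ⟨r, m₁ - i * p, hr0, hrq, hs.uIcc_subset hu hv ?_⟩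
  have hjR : (k : ℝ) + l = q * j := by exact_mod_cast hj
  have hNR : (m₂ : ℝ) - m₁ + j * p = 0 := by exact_mod_cast hN'
  have hdR : (r : ℝ) + q * i = k := by exact_mod_cast hdiv
  have hi0R : (0 : ℝ) ≤ i := by exact_mod_cast hi0
  have hijR : (i : ℝ) ≤ j := by exact_mod_cast hij
  have ew : (((m₁ - i * p : ℤ) : ℝ) - r * α) = (m₁ - k * α) + i * (q * α - p) := by
    push_cast; linear_combination -α * hdR
  have ev : (m₂ + l * α : ℝ) = (m₁ - k * α) + j * (q * α - p) := by
    linear_combination hNR + α * hjR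
  rw [ew, ev, Set.mem_uIcc]
  rcases le_total 0 ((q : ℝ) * α - p) with h | h
  · left; constructor <;> nlinarith
  · right; constructor <;> nlinarith

lemma normT_sub_comm (x y : ℝ) : |y - x - round (y - x)| = normT (x - y) := by
  -- rounding is not odd at half-integers, so the two sides are compared by minimality of `round`
  have h1 := round_le (y - x) (-round (x - y))
  have h2 := round_le (x - y) (-round (y - x))
  have e1 : |y - x - ((-round (x - y) : ℤ) : ℝ)| = |x - y - round (x - y)| := by
    rw [← abs_neg]; congr 1; push_cast; ring
  have e2 : |x - y - ((-round (y - x) : ℤ) : ℝ)| = |y - x - round (y - x)| := by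
    rw [← abs_neg]; congr 1; push_cast; ring
  rw [e1] at h1
  rw [e2] at h2
  exact le_antisymm h1 h2

/-- Translating both endpoints by `t` moves the lifted arc by `t`. -/
lemma hitsZero_add_iff (x y t : ℝ) :
    hitsZero (x + t) (y + t) ↔
      ∃ m : ℤ, (m : ℝ) - t ∈ Set.uIcc x (x + (y - x - round (y - x))) := by
  unfold hitsZero
  refine exists_congr fun m => ?_
  rw [show y + t - (x + t) = y - x by ring, Set.mem_uIcc, Set.mem_uIcc]
  constructor <;> rintro (⟨h, h'⟩ | ⟨h, h'⟩)
  · left; constructor <;> linarith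
  · right; constructor <;> linarith
  · left; constructor <;> linarith
  · right; constructor <;> linarith

/-- If `‖x-y‖ < 1/(6q_n)` then either (a) the orbit of `[x,y]` hits `0` within time `q_n`, or
(b) the forward orbit avoids `0` up to time `⌊q_{n+1}/6⌋`, or (c) the backward orbit avoids `0`
up to time `-⌊q_{n+1}/6⌋`. -/
theorem orbit_of_arc_avoids_discontinuity
    (α : ℝ) (hα : Irrational α) (x y : ℝ) (hxy : normT (x - y) ≠ 0)
    (n : ℕ) (hd : normT (x - y) < 1 / (6 * qden α n)) :
    (∃ k : ℕ, (k : ℝ) < qden α n ∧ hitsZero (x + k * α) (y + k * α)) ∨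
    (∀ k : ℕ, (k : ℝ) ≤ (⌊qden α (n + 1) / 6⌋ : ℤ) →
      ¬ hitsZero (x + k * α) (y + k * α)) ∨
    (∀ k : ℤ, -⌊qden α (n + 1) / 6⌋ ≤ k → k ≤ 0 →
      ¬ hitsZero (x + k * α) (y + k * α)) := by
  rw [or_iff_not_imp_right]
  intro h
  push Not at h
  obtain ⟨⟨k, hk, hkz⟩, l, hl, hl0, hlz⟩ := h
  obtain ⟨p, q, hq, hc, hθ⟩ := exists_coprime_convergent α hα n
  have hq0 : 0 < q := by
    have := qden_pos α hα n
    rw [← hq] at this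
    exact_mod_cast this
  rw [hitsZero_add_iff] at hkz hlz
  obtain ⟨m₁, h₁⟩ := hkz
  obtain ⟨m₂, h₂⟩ := hlz
  rw [← normT_sub_comm, ← hq] at hd
  have hfl := Int.floor_le (qden α (n + 1) / 6)
  have hl' : ((-l : ℤ) : ℝ) ≤ (⌊qden α (n + 1) / 6⌋ : ℤ) := by exact_mod_cast (by omega)
  obtain ⟨r, m, hr0, hrq, hm⟩ := arc_returns (k := k) (l := -l) hq0 (qden_pos α hα (n + 1)) hc hθ
    (Set.ordConnected_uIcc (a := x) (b := x + (y - x - round (y - x))))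
    (fun u hu v hv => lt_of_le_of_lt (by
      simpa using Set.abs_sub_le_of_uIcc_subset_uIcc (Set.uIcc_subset_uIcc hu hv)) hd)
    (by positivity) (by omega) (by push_cast; linarith) (by linarith)
    (by simpa using h₁) (by simpa [sub_eq_add_neg] using h₂)
  lift r to ℕ using hr0
  refine ⟨r, by rw [← hq]; exact_mod_cast hrq, ?_⟩
  rw [hitsZero_add_iff]
  exact ⟨m, by simpa using hm⟩
end

section
/- Let α be an irrational number with continued fraction denominators (q_n), let 0 < L ≤ 1 ≤ M, 0 < β ≤ 1, and let x, y ∈ 𝕋 with 0 < ‖x−y‖ ≤ β/(200 M q_n) for some n ≥ 1. Then for every integer m with 0 ≤ m ≤ (20M/L)·q_n, the number of indices i ∈ {0, …, m−1} such that 0 ∈ R_α^i [x,y] is at most 40M/L. -/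
open GenContFract in
/-- Consecutive continuants `(p', q')`, `(p, q)` of an irrational `α` are integral and unimodular,
and recover `α` through the remainder `ifp.fr`. As `contsAux` is shifted by one, `q` is the `n`-th
denominator, and for `n = 0` the pair `(p', q')` is `(1, 0)`. -/
theorem exists_convergent_data {α : ℝ} (hα : Irrational α) (n : ℕ) :
    ∃ (ifp : IntFractPair ℝ) (p q p' q' : ℤ), IntFractPair.stream α n = some ifp ∧
      Irrational ifp.fr ∧ 0 < ifp.fr ∧ ifp.fr < 1 ∧
      (GenContFract.of α).contsAux n = ⟨(p' : ℝ), (q' : ℝ)⟩ ∧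
      (GenContFract.of α).contsAux (n + 1) = ⟨(p : ℝ), (q : ℝ)⟩ ∧
      0 ≤ q' ∧ q' ≤ q ∧ 0 < q ∧ (p' * q - p * q' = 1 ∨ p' * q - p * q' = -1) ∧
      α * (q + ifp.fr * q') = p + ifp.fr * p' := by
  have fract_pos : ∀ v : ℝ, Irrational v → Irrational (Int.fract v) ∧ 0 < Int.fract v := by
    intro v hv
    have h : Irrational (Int.fract v) := by
      rw [Int.fract]; exact irrational_sub_intCast_iff.2 hv
    exact ⟨h, lt_of_le_of_ne (Int.fract_nonneg v) (Ne.symm h.ne_zero)⟩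
  induction n with
  | zero =>
    refine ⟨IntFractPair.of α, ⌊α⌋, 1, 1, 0, rfl, (fract_pos α hα).1, (fract_pos α hα).2,
      Int.fract_lt_one α, ?_, ?_, by norm_num, by norm_num, by norm_num, by norm_num, ?_⟩
    · simp [contsAux]
    · simp [contsAux, of_h_eq_floor]
    · simp [IntFractPair.of]
  | succ n ih =>
    obtain ⟨ifp, p, q, p', q', hs, hirr, h0, h1, hc, hc', hq', hqq, hq, hdet, hval⟩ := ih
    have hs' := IntFractPair.stream_succ_of_some hs h0.ne'
    have hirr' : Irrational ifp.fr⁻¹ := irrational_inv_iff.2 hirr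
    have hb : 1 ≤ ⌊ifp.fr⁻¹⌋ := by
      rw [Int.le_floor]
      exact_mod_cast (one_le_inv₀ h0).2 h1.le
    have hrec := contsAux_recurrence (get?_of_eq_some_of_succ_get?_intFractPair_stream hs') hc hc'
    have hfr : (IntFractPair.of ifp.fr⁻¹).fr = ifp.fr⁻¹ - ⌊ifp.fr⁻¹⌋ := rfl
    have hfb : (IntFractPair.of ifp.fr⁻¹).b = ⌊ifp.fr⁻¹⌋ := rfl
    refine ⟨_, ⌊ifp.fr⁻¹⌋ * p + p', ⌊ifp.fr⁻¹⌋ * q + q', p, q, hs', (fract_pos _ hirr').1,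
      (fract_pos _ hirr').2, Int.fract_lt_one _, hc', ?_, hq.le, ?_, ?_, ?_, ?_⟩
    · rw [hrec, hfb]; push_cast; simp
    · nlinarith
    · nlinarith
    · rcases hdet with h | h
      · right; linear_combination -h
      · left; linear_combination -h
    · rw [hfr]
      push_cast
      have hne := h0.ne'
      generalize (⌊ifp.fr⁻¹⌋ : ℝ) = b
      field_simp
      linear_combination hval

/-- The denominators satisfy `‖kα‖ ≥ 1 / (2 q_n)` for `0 < k < q_n`. -/
theorem one_le_abs_mul_sub {α : ℝ} (hα : Irrational α) (n : ℕ) :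
    ∃ Q : ℕ, 0 < Q ∧ qden α n = Q ∧
      ∀ k : ℕ, 0 < k → k < Q → ∀ l : ℤ, 1 ≤ |(k : ℝ) * α - l| * (2 * Q) := by
  obtain ⟨ifp, p, q, p', q', -, -, h0, h1, -, hc', hq', hqq, hq, hdet, hval⟩ :=
    exists_convergent_data hα n
  lift q to ℕ using hq.le
  refine ⟨q, by exact_mod_cast hq, ?_, ?_⟩
  · rw [qden, GenContFract.den_eq_conts_b, GenContFract.nth_cont_eq_succ_nth_contAux, hc']
    simp
  intro k hk hkq l
  generalize ifp.fr = t at *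
  -- `A` and `B` are, up to sign, the coordinates of `(k, l)` in the basis `(q, p)`, `(q', p')`.
  obtain ⟨A, hA⟩ : ∃ A : ℤ, A = k * p' - l * q' := ⟨_, rfl⟩
  obtain ⟨B, hB⟩ : ∃ B : ℤ, B = k * p - l * q := ⟨_, rfl⟩
  have hk' : (0 : ℤ) < k := by exact_mod_cast hk
  have hkq' : (k : ℤ) < q := by exact_mod_cast hkq
  have hAB : A * q - B * q' < q ∧ -q < A * q - B * q' ∧ A * q - B * q' ≠ 0 := by
    have : A * q - B * q' = k * (p' * q - p * q') := by rw [hA, hB]; ring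
    rw [this]
    rcases hdet with h | h <;> rw [h] <;> refine ⟨?_, ?_, ?_⟩ <;> omega
  obtain ⟨hlt, hgt, hne⟩ := hAB
  have hD : ((k : ℝ) * α - l) * (q + t * q') = B + t * A := by
    rw [hA, hB]
    push_cast at hval ⊢
    linear_combination (k : ℝ) * hval
  -- `B ≠ 0` because `q ∤ k`, and `A` cannot have the sign opposite to that of `B`.
  have hone : 1 ≤ |(B : ℝ) + t * A| := by
    rcases lt_trichotomy B 0 with hb | hb | hb
    · have hA0 : A ≤ 0 := by
        by_contra! h
        nlinarith
      have hb' : (B : ℝ) ≤ -1 := by exact_mod_cast (by omega : B ≤ -1)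
      have hA' : (A : ℝ) ≤ 0 := by exact_mod_cast hA0
      rw [le_abs]; right
      nlinarith
    · subst hb
      exfalso
      rcases lt_trichotomy A 0 with h | h | h
      · nlinarith
      · subst h; simp at hne
      · nlinarith
    · have hA0 : 0 ≤ A := by
        by_contra! h
        nlinarith
      have hb' : (1 : ℝ) ≤ B := by exact_mod_cast (by omega : 1 ≤ B)
      have hA' : (0 : ℝ) ≤ A := by exact_mod_cast hA0
      rw [le_abs]; left
      nlinarith
  have hq'R : (0 : ℝ) ≤ q' := by exact_mod_cast hq'
  have hqqR : (q' : ℝ) ≤ q := by exact_mod_cast hqq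
  rw [← hD, abs_mul] at hone
  refine hone.trans (mul_le_mul_of_nonneg_left ?_ (abs_nonneg _))
  rw [abs_of_nonneg (by positivity)]
  nlinarith

theorem normT_comm (x y : ℝ) : normT (x - y) = normT (y - x) := by
  have key : ∀ a b : ℝ, normT (a - b) ≤ normT (b - a) := by
    intro a b
    have h := round_le (a - b) (-round (b - a))
    refine h.trans (le_of_eq ?_)
    rw [normT, ← abs_neg]
    push_cast
    ring_nf
  exact le_antisymm (key x y) (key y x)

/-- Two hits at times `i`, `j` force `‖(j-i)α‖ ≤ ‖x-y‖`. -/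
theorem exists_abs_le_of_hitsZero {α x y : ℝ} {i j : ℕ}
    (hi : hitsZero (x + i * α) (y + i * α)) (hj : hitsZero (x + j * α) (y + j * α)) :
    ∃ l : ℤ, |((j : ℝ) - i) * α - l| ≤ normT (x - y) := by
  obtain ⟨a, ha⟩ := hi
  obtain ⟨b, hb⟩ := hj
  refine ⟨b - a, ?_⟩
  have e : ∀ r : ℝ, y + r - (x + r) = y - x := fun r => by ring
  rw [e, Set.mem_uIcc] at ha hb
  rw [normT_comm, normT]
  generalize y - x - (round (y - x) : ℝ) = w at *
  push_cast
  have h1 := le_abs_self w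
  have h2 := neg_le_abs w
  rw [abs_le]
  rcases ha with ha | ha <;> rcases hb with hb | hb <;> constructor <;> linarith [ha.1, ha.2, hb.1, hb.2]

/-- If `0 < ‖x-y‖ ≤ β/(200 M q_n)` with `0 < L ≤ 1 ≤ M` and `0 < β ≤ 1`, then for every
`0 ≤ m ≤ (20M/L) q_n` the number of `i ∈ {0,…,m-1}` with `0 ∈ R_α^i [x,y]` is at most `40M/L`. -/
theorem number_of_hits_bound
    (α : ℝ) (hα : Irrational α) (L M β : ℝ)
    (hL : 0 < L) (hL1 : L ≤ 1) (hM : 1 ≤ M) (hβ : 0 < β) (hβ1 : β ≤ 1)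
    (x y : ℝ) (n : ℕ) (hn : 1 ≤ n)
    (hd0 : 0 < normT (x - y)) (hd : normT (x - y) ≤ β / (200 * M * qden α n)) :
    ∀ m : ℕ, (m : ℝ) ≤ (20 * M / L) * qden α n →
      (({i : ℕ | i < m ∧ hitsZero (x + i * α) (y + i * α)}.ncard : ℝ)) ≤ 40 * M / L := by

  intro m hm
  obtain ⟨Q, hQ, hqQ, hbest⟩ := one_le_abs_mul_sub hα n
  rw [hqQ] at hd hm
  have hQR : (1 : ℝ) ≤ Q := by exact_mod_cast hQ
  have hdist : normT (x - y) * (2 * Q) < 1 := by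
    have hpos : 0 < 200 * M * (Q : ℝ) := by positivity
    rw [le_div_iff₀ hpos] at hd
    have : normT (x - y) * Q ≤ normT (x - y) * Q * M := le_mul_of_one_le_right (by positivity) hM
    nlinarith
  have hsep : ∀ i j : ℕ, hitsZero (x + i * α) (y + i * α) → hitsZero (x + j * α) (y + j * α) →
      i < j → Q ≤ j - i := by
    intro i j hi hj hij
    by_contra! hlt
    obtain ⟨l, hl⟩ := exists_abs_le_of_hitsZero hi hj
    have h := hbest (j - i) (by omega) hlt l
    rw [Nat.cast_sub hij.le] at h
    have := mul_le_mul_of_nonneg_right hl (by positivity : (0 : ℝ) ≤ 2 * Q)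
    linarith
  -- Hits lie in distinct blocks of length `Q`, and these are indexed by `0, …, m / Q`.
  have hcard : {i : ℕ | i < m ∧ hitsZero (x + i * α) (y + i * α)}.ncard ≤ m / Q + 1 := by
    have hle := Set.ncard_le_ncard_of_injOn
      (s := {i : ℕ | i < m ∧ hitsZero (x + i * α) (y + i * α)})
      (t := (Finset.range (m / Q + 1) : Set ℕ)) (fun i => i / Q) ?_ ?_ (Finset.finite_toSet _)
    · rwa [Set.ncard_coe_finset, Finset.card_range] at hle
    · intro i hi
      have := Nat.div_le_div_right (c := Q) hi.1.le
      simp only [Finset.coe_range, Set.mem_Iio]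
      omega
    · have hblock : ∀ i j : ℕ, i / Q = j / Q → j < i + Q := by
        intro i j hij
        have h1 := Nat.div_add_mod i Q
        have h2 := Nat.div_add_mod j Q
        have h3 := Nat.mod_lt j hQ
        rw [hij] at h1
        omega
      intro i hi j hj hij
      have hij' : i / Q = j / Q := hij
      rcases lt_trichotomy i j with h | h | h
      · have := hsep i j hi.2 hj.2 h
        have := hblock i j hij'
        omega
      · exact h
      · have := hsep j i hj.2 hi.2 h
        have := hblock j i hij'.symm
        omega
  have hdiv : ((m / Q : ℕ) : ℝ) ≤ 20 * M / L :=
    Nat.cast_div_le.trans ((div_le_iff₀ (by positivity)).2 hm)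
  have hML : 1 ≤ M / L := (one_le_div hL).2 (hL1.trans hM)
  have hcardR : ({i : ℕ | i < m ∧ hitsZero (x + i * α) (y + i * α)}.ncard : ℝ)
      ≤ ((m / Q : ℕ) : ℝ) + 1 := by exact_mod_cast hcard
  have e1 : 20 * M / L = 20 * (M / L) := by ring
  have e2 : 40 * M / L = 40 * (M / L) := by ring
  rw [e1] at hdiv
  rw [e2]
  linarith
end

section
/- Let α be an irrational number and let x, y ∈ [0,1) with ‖x−y‖ < 1/2. Let n ≥ 1 and suppose that for every i with 0 ≤ i < n the point 0 of 𝕋 does not belong to the shortest arc in 𝕋 connecting x + iα and y + iα (mod 1). Then |Σ_{i=0}^{n−1} ({x + iα} − {y + iα})| = n·‖x−y‖. -/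
lemma normT_neg (z : ℝ) : normT (-z) = normT z := by
  have key : ∀ w : ℝ, normT (-w) ≤ normT w := fun w => by
    have h := round_le (-w) (-round w)
    have e : -w - ((-round w : ℤ) : ℝ) = -(w - round w) := by push_cast; ring
    rwa [e, abs_neg] at h
  exact le_antisymm (key z) (by simpa using key (-z))

/-- If no integer lies between two reals, they have the same floor. -/
lemma floor_eq_of_forall_notMem_uIcc {a c : ℝ} (h : ∀ m : ℤ, (m : ℝ) ∉ Set.uIcc a c) :
    ⌊a⌋ = ⌊c⌋ := by
  rcases lt_trichotomy ⌊a⌋ ⌊c⌋ with hlt | heq | hlt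
  · exact absurd (Set.mem_uIcc_of_le (Int.floor_lt.mp hlt).le (Int.floor_le c)) (h ⌊c⌋)
  · exact heq
  · exact absurd (Set.mem_uIcc_of_ge (Int.floor_lt.mp hlt).le (Int.floor_le a)) (h ⌊a⌋)

lemma fract_sub_fract_of_not_hitsZero {a b : ℝ} (h : ¬ hitsZero a b) :
    Int.fract a - Int.fract b = -(b - a - round (b - a)) := by
  have hfl := floor_eq_of_forall_notMem_uIcc (not_exists.mp h)
  have hb : Int.fract b = Int.fract (a + (b - a - round (b - a))) := by
    rw [show a + (b - a - round (b - a)) = b - (round (b - a) : ℤ) by ring, Int.fract_sub_intCast]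
  rw [hb, Int.fract, Int.fract, ← hfl]
  ring

/-- If the orbit of the shortest arc connecting `x` and `y` avoids the point `0` of the circle
for times `0 ≤ i < n`, then the fractional parts diverge linearly:
`|∑_{i=0}^{n-1} ({x+iα} - {y+iα})| = n ‖x-y‖`. -/
theorem fract_sum_linear_divergence
    (α : ℝ) (hα : Irrational α) (x y : ℝ)
    (hx : x ∈ Set.Ico (0 : ℝ) 1) (hy : y ∈ Set.Ico (0 : ℝ) 1)
    (hxy : normT (x - y) < 1 / 2) (n : ℕ) (hn : 1 ≤ n)
    (havoid : ∀ i : ℕ, i < n → ¬ hitsZero (x + i * α) (y + i * α)) :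
    |∑ i ∈ Finset.range n, (Int.fract (x + i * α) - Int.fract (y + i * α))|
      = n * normT (x - y) := by
  have hterm : ∀ i ∈ Finset.range n, Int.fract (x + i * α) - Int.fract (y + i * α)
      = -(y - x - round (y - x)) := fun i hi => by
    rw [fract_sub_fract_of_not_hitsZero (havoid i (Finset.mem_range.mp hi)),
      add_sub_add_right_eq_sub]
  rw [Finset.sum_congr rfl hterm, Finset.sum_const, Finset.card_range, nsmul_eq_mul, abs_mul,
    abs_neg, Nat.abs_cast, ← neg_sub y x, normT_neg, normT]
end

section
/- Let (X, μ) be a probability space and (T_t)_{t∈ℝ} a jointly measurable flow on X (T_0 = id, T_{t+s} = T_t ∘ T_s) with each T_t measure-preserving. Let P : X → {1, …, k} be a measurable finite partition, H > 0, 0 < ε < 1, B ⊂ X measurable, and ν a finite measure on X concentrated on B with ν(B) > 0. Assume there is a measurable set G ⊂ [0, H) with Lebesgue measure λ(G) ≥ (1 − ε²/4)·H such that for every t ∈ G there exists an atom P_t of P with ν(B ∩ T_t^{−1} P_t) ≥ (1 − ε²/4)·ν(B). Then there exists a measurable set D ⊂ B with ν(D) > (1 − ε)·ν(B) such that for all x,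 y ∈ D the Hamming distance satisfies d^P_H(x, y) < ε. -/
/-!
For `t ∈ G` the atom carrying a `1 - ε²/4 > 1/2` proportion of `B` is unique, since two disjoint
subsets of `B` cannot both carry more than half of its mass (`heavy_atom_unique`). The set `A` of
pairs `(t, x)`, `t ∈ G`, for which `x` is not in the heavy atom at time `t` is therefore measurable,
and its slices at fixed `t` have measure at most `(ε²/4) ν(B)`. By Tonelli the time
`f x = λ {t | (t, x) ∈ A}` that `x` spends off the heavy atom has integral at most `(ε²/4) H ν(B)`,
so by Markov's inequality `f x < (3ε/8) H` off a set of measure at most `(2ε/3) ν(B)`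
(`exists_large_set_few_bad_times`). Two points that are both in the heavy atom at a time `t ∈ G`
agree at that time, so any two of the remaining points disagree for a time less than
`(3ε/8 + 3ε/8 + ε²/4) H < ε H`.
-/

open MeasureTheory

theorem heavy_atom_unique {X : Type*} [MeasurableSpace X] {ν : Measure X} [IsFiniteMeasure ν]
    {k : ℕ} {q : X → Fin k} (hq : Measurable q) {B : Set X} (hB : MeasurableSet B)
    (hBpos : 0 < ν.real B) {c : ℝ} (hc : 1 / 2 < c) {i j : Fin k}
    (hi : c * ν.real B ≤ ν.real (B ∩ q ⁻¹' {i}))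
    (hj : c * ν.real B ≤ ν.real (B ∩ q ⁻¹' {j})) : i = j := by
  by_contra hij
  have hd : Disjoint (B ∩ q ⁻¹' {i}) (B ∩ q ⁻¹' {j}) := by
    rw [Set.disjoint_left]
    rintro x ⟨_, h1⟩ ⟨_, h2⟩
    exact hij (h1.symm.trans h2)
  have h1 := measureReal_union (μ := ν) hd (hB.inter (hq (measurableSet_singleton j)))
  have h2 : ν.real (B ∩ q ⁻¹' {i} ∪ B ∩ q ⁻¹' {j}) ≤ ν.real B :=
    measureReal_mono (Set.union_subset Set.inter_subset_left Set.inter_subset_left)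
  nlinarith

/-- Tonelli and Markov: if every time slice of `A` over `G` has `ν`-measure at most `a` and the
slices off `G` are empty, then, outside a set of `ν`-measure at most `a * h / c`, points are in `A`
for a time less than `c`. -/
theorem exists_large_set_few_bad_times {X : Type*} [MeasurableSpace X] {ν : Measure X}
    [IsFiniteMeasure ν] {A : Set (ℝ × X)} (hA : MeasurableSet A) {G : Set ℝ}
    (hG : MeasurableSet G) {a c h : ℝ} (ha : 0 ≤ a) (hc : 0 < c) (hh : 0 ≤ h)
    (hGh : volume G ≤ ENNReal.ofReal h)
    (hAG : ∀ p ∈ A, p.1 ∈ G) (hslice : ∀ t ∈ G, ν.real {x | (t, x) ∈ A} ≤ a) :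
    ∃ E : Set X, MeasurableSet E ∧ ν.real E ≤ a * h / c ∧
      ∀ x ∉ E, volume {t : ℝ | (t, x) ∈ A} < ENNReal.ofReal c := by
  have hf : Measurable fun x => (volume : Measure ℝ) {t : ℝ | (t, x) ∈ A} :=
    measurable_measure_prodMk_right hA
  refine ⟨{x | ENNReal.ofReal c ≤ (volume : Measure ℝ) {t : ℝ | (t, x) ∈ A}},
    measurableSet_le measurable_const hf, ?_, fun x hx => not_le.mp hx⟩
  have hmarkov := mul_meas_ge_le_lintegral (μ := ν) hf (ENNReal.ofReal c)
  have hswap : ∫⁻ x, (volume : Measure ℝ) {t : ℝ | (t, x) ∈ A} ∂ν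
      = ∫⁻ t, ν {x | (t, x) ∈ A} :=
    (Measure.prod_apply_symm (μ := (volume : Measure ℝ)) (ν := ν) hA).symm.trans
      (Measure.prod_apply hA)
  have hbound : ∫⁻ t, ν {x | (t, x) ∈ A} ≤ ENNReal.ofReal (a * h) := by
    calc ∫⁻ t, ν {x | (t, x) ∈ A}
        ≤ ∫⁻ t, G.indicator (fun _ => ENNReal.ofReal a) t := by
          refine lintegral_mono fun t => ?_
          by_cases ht : t ∈ G
          · rw [Set.indicator_of_mem ht, ← ofReal_measureReal]
            exact ENNReal.ofReal_le_ofReal (hslice t ht)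
          · have : {x | (t, x) ∈ A} = ∅ :=
              Set.eq_empty_of_forall_notMem fun x hx => ht (hAG _ hx)
            simp [this]
      _ = ENNReal.ofReal a * volume G := lintegral_indicator_const hG _
      _ ≤ ENNReal.ofReal (a * h) := by
          rw [ENNReal.ofReal_mul ha]
          gcongr
  have hfin := (hmarkov.trans hswap.le).trans hbound
  rw [← ofReal_measureReal (μ := ν), ← ENNReal.ofReal_mul hc.le,
    ENNReal.ofReal_le_ofReal_iff (by positivity)] at hfin
  rw [le_div_iff₀ hc]
  linarith

/-- Lemma on `ε`-monochromatic towers: if a `1 - ε²/4` proportion of times `t ∈ [0,H)` are such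
that a `1 - ε²/4` proportion of `B` (w.r.t. `ν`) lands in a single atom of `P` at time `t`, then
there is `D ⊆ B` with `ν(D) > (1-ε)ν(B)` on which all pairs of points are `ε`-close in the
Hamming distance `d^P_H(x,y) = λ({0 ≤ t < H : P(T_t x) ≠ P(T_t y)})/H`. -/
theorem monochromatic_tower_hamming
    {X : Type*} [MeasurableSpace X]
    (μ : Measure X) [IsProbabilityMeasure μ]
    (T : ℝ → X → X)
    (hT0 : T 0 = id) (hTflow : ∀ t s : ℝ, T (t + s) = T t ∘ T s)
    (hTmeas : Measurable fun p : ℝ × X => T p.1 p.2)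
    (hTpres : ∀ t : ℝ, MeasurePreserving (T t) μ μ)
    (k : ℕ) (P : X → Fin k) (hP : Measurable P)
    (H : ℝ) (hH : 0 < H) (ε : ℝ) (hε0 : 0 < ε) (hε1 : ε < 1)
    (B : Set X) (hB : MeasurableSet B)
    (ν : Measure X) [IsFiniteMeasure ν]
    (hconc : ν Bᶜ = 0) (hBpos : 0 < ν B)
    (G : Set ℝ) (hG : MeasurableSet G) (hGsub : G ⊆ Set.Ico 0 H)
    (hGbig : ENNReal.ofReal ((1 - ε ^ 2 / 4) * H) ≤ volume G)
    (hmono : ∀ t ∈ G, ∃ j : Fin k,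
      ENNReal.ofReal (1 - ε ^ 2 / 4) * ν B ≤ ν (B ∩ T t ⁻¹' (P ⁻¹' {j}))) :
    ∃ D : Set X, MeasurableSet D ∧ D ⊆ B ∧
      ENNReal.ofReal (1 - ε) * ν B < ν D ∧
      ∀ x ∈ D, ∀ y ∈ D,
        (volume {t : ℝ | t ∈ Set.Ico (0 : ℝ) H ∧ P (T t x) ≠ P (T t y)}).toReal / H < ε := by
  have hcc : (0 : ℝ) ≤ 1 - ε ^ 2 / 4 := by nlinarith
  have hhalf : (1 : ℝ) / 2 < 1 - ε ^ 2 / 4 := by nlinarith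
  have hb : 0 < ν.real B := ENNReal.toReal_pos hBpos.ne' (measure_ne_top _ _)
  have hQ : Measurable fun p : ℝ × X => P (T p.1 p.2) := hP.comp hTmeas
  have hQt : ∀ t, Measurable fun x => P (T t x) := fun t => hQ.comp measurable_prodMk_left
  have hmono' : ∀ t ∈ G, ∃ j : Fin k,
      (1 - ε ^ 2 / 4) * ν.real B ≤ ν.real (B ∩ (fun x => P (T t x)) ⁻¹' {j}) := by
    intro t ht
    obtain ⟨j, hj⟩ := hmono t ht
    refine ⟨j, ?_⟩
    have := ENNReal.toReal_mono (measure_ne_top _ _) hj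
    rwa [ENNReal.toReal_mul, ENNReal.toReal_ofReal hcc] at this
  have hweight : ∀ j : Fin k,
      Measurable fun t => ν.real (B ∩ (fun x => P (T t x)) ⁻¹' {j}) := by
    intro j
    have hS : MeasurableSet {p : ℝ × X | p.2 ∈ B ∧ P (T p.1 p.2) = j} :=
      (measurable_snd hB).inter (hQ (measurableSet_singleton j))
    exact (measurable_measure_prodMk_left (ν := ν) hS).ennreal_toReal
  let A : Set (ℝ × X) := {p | p.1 ∈ G ∧ ∃ j : Fin k,
    (1 - ε ^ 2 / 4) * ν.real B ≤ ν.real (B ∩ (fun x => P (T p.1 x)) ⁻¹' {j}) ∧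
      P (T p.1 p.2) ≠ j}
  have hA : MeasurableSet A := by
    have hrest : MeasurableSet {p : ℝ × X | ∃ j : Fin k,
        (1 - ε ^ 2 / 4) * ν.real B ≤ ν.real (B ∩ (fun x => P (T p.1 x)) ⁻¹' {j}) ∧
          P (T p.1 p.2) ≠ j} := by
      rw [Set.ofPred_exists]
      refine MeasurableSet.iUnion fun j => ?_
      exact (measurableSet_le measurable_const ((hweight j).comp measurable_fst)).inter
        (hQ (measurableSet_singleton j)).compl
    exact (measurable_fst hG).inter hrest
  have hslice : ∀ t ∈ G, ν.real {x | (t, x) ∈ A} ≤ ε ^ 2 / 4 * ν.real B := by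
    intro t ht
    obtain ⟨j, hj⟩ := hmono' t ht
    have hsub : {x | (t, x) ∈ A} ⊆ (B \ (fun x => P (T t x)) ⁻¹' {j}) ∪ Bᶜ := by
      rintro x ⟨_, i, hi, hne⟩
      obtain rfl := heavy_atom_unique (hQt t) hB hb hhalf hi hj
      by_cases hx : x ∈ B
      · exact Or.inl ⟨hx, hne⟩
      · exact Or.inr hx
    have h1 := (measureReal_mono (μ := ν) hsub).trans (measureReal_union_le _ _)
    have h2 : ν.real Bᶜ = 0 := by simp [measureReal_def, hconc]
    have h3 := measureReal_inter_add_sdiff (μ := ν) (s := B)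
      (hQt t (measurableSet_singleton j))
    linarith
  have hGH : volume G ≤ ENNReal.ofReal H := by
    simpa using measure_mono (μ := volume) hGsub
  obtain ⟨E, hE, hEsmall, hEgood⟩ := exists_large_set_few_bad_times hA hG
    (c := 3 * ε / 8 * H) (by positivity) (by positivity) hH.le hGH (fun p hp => hp.1) hslice
  have hEsmall' : ν.real E ≤ 2 * ε / 3 * ν.real B := by
    refine hEsmall.trans (le_of_eq ?_)
    field_simp
    norm_num
  refine ⟨B \ E, hB.diff hE, Set.sdiff_subset, ?_, ?_⟩
  · have h1 : ν.real B ≤ ν.real (B \ E) + ν.real E :=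
      (measureReal_mono (by intro x hx; by_cases h : x ∈ E <;> simp [hx, h])).trans
        (measureReal_union_le _ _)
    rw [← ofReal_measureReal (μ := ν) (s := B), ← ofReal_measureReal (μ := ν) (s := B \ E),
      ← ENNReal.ofReal_mul (by linarith), ENNReal.ofReal_lt_ofReal_iff']
    constructor <;> nlinarith [mul_pos hε0 hb]
  · rintro x ⟨_, hx⟩ y ⟨_, hy⟩
    have hfx := hEgood x hx
    have hfy := hEgood y hy
    have hcompl : volume (Set.Ico 0 H \ G) ≤ ENNReal.ofReal (ε ^ 2 / 4 * H) := by
      rw [measure_sdiff hGsub hG.nullMeasurableSet (ne_top_of_le_ne_top ENNReal.ofReal_ne_top hGH),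
        Real.volume_Ico, tsub_le_iff_right]
      refine le_trans ?_ (add_le_add le_rfl hGbig)
      rw [← ENNReal.ofReal_add (by positivity) (by positivity)]
      exact ENNReal.ofReal_le_ofReal (by linarith)
    have hsub : {t : ℝ | t ∈ Set.Ico (0 : ℝ) H ∧ P (T t x) ≠ P (T t y)} ⊆
        ({t | (t, x) ∈ A} ∪ {t | (t, y) ∈ A}) ∪ (Set.Ico 0 H \ G) := by
      rintro t ⟨htH, hne⟩
      by_cases ht : t ∈ G
      · obtain ⟨j, hj⟩ := hmono' t ht
        by_cases hxj : P (T t x) = j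
        · exact Or.inl (Or.inr ⟨ht, j, hj, fun hyj => hne (hxj.trans hyj.symm)⟩)
        · exact Or.inl (Or.inl ⟨ht, j, hj, hxj⟩)
      · exact Or.inr ⟨htH, ht⟩
    have htotal := calc
      volume {t : ℝ | t ∈ Set.Ico (0 : ℝ) H ∧ P (T t x) ≠ P (T t y)}
        ≤ volume {t | (t, x) ∈ A} + volume {t | (t, y) ∈ A} + volume (Set.Ico 0 H \ G) :=
          (measure_mono hsub).trans ((measure_union_le _ _).trans
            (add_le_add (measure_union_le _ _) le_rfl))
      _ ≤ ENNReal.ofReal (3 * ε / 8 * H) + ENNReal.ofReal (3 * ε / 8 * H)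
            + ENNReal.ofReal (ε ^ 2 / 4 * H) := add_le_add (add_le_add hfx.le hfy.le) hcompl
      _ = ENNReal.ofReal ((3 * ε / 4 + ε ^ 2 / 4) * H) := by
          rw [← ENNReal.ofReal_add (by positivity) (by positivity),
            ← ENNReal.ofReal_add (by positivity) (by positivity)]
          congr 1
          ring
    have hreal := ENNReal.toReal_le_of_le_ofReal (by positivity) htotal
    rw [div_lt_iff₀ hH]
    refine hreal.trans_lt (mul_lt_mul_of_pos_right ?_ hH)
    nlinarith
end
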